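/- Let m ≥ 2 be even and c > 0 even, and set R = (m² + mc)/4 + c/2. For any 2-coloring of {1, ..., R} there exists a monochromatic solution to x_1 + x_2 + ... + x_m + c = 2·x_0. -/

import Mathlib

/-!
Write `m = 2k`, `c = 2d`, so that `R = k(k + d) + d`, and let `A` and `B` be the colour classes,
with `1 ∈ A`. Suppose neither contains a solution. If `[a, b]` lies in one class, then the part of
`[ka + d, kb + d]` inside `[1, R]` lies in the other. For `k = 1` this puts `1 + d` in `B` and `R`
in `A`, where `1 + R + c = 2R` is a solution.

For `k ≥ 2` it puts `k + d` in `B`; let `[1, s] ⊆ A` with `s + 1 ∈ B`, so that `s + 1 ≤ k + d` and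
`w = k(s + 1) + d ∈ A`. Two consecutive integers are then sums of `m` elements of `A` and also sums
of `m` elements of `B`. One of the two has the form `2y - c`, and `y` fits in neither class.
* If `s ≥ 2`, then `B` contains `k + d` and `k + d + 1`; add `m - 1` copies of `s + 1` to either.
  In `A` the same sums arise from `w` and `m - 1` elements of `[1, s]`.
* If `s = 1`, then `3 ∈ B`, since `k` ones and `k` threes give a solution with `y = w`. Hence `A`
  contains `3k + d - 1` and `3k + d`; add `m - 1` ones to either. In `B` the same sums arise from
  `k + d` and `m - 1` elements of `[2, 3]`.
-/

section Sumset

variable {M : Type*} [AddCommMonoid M] {A : Set M} {S T : M} {m n : ℕ}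

/-- The `n`-fold sumset `A + ⋯ + A`: all sums of `n` elements of `A`, repetitions allowed.
(The pointwise `n • A` is avoided because for `A : Set ℕ` it can also mean the dilate of `A`.) -/
def nfoldSumset (n : ℕ) (A : Set M) : Set M :=
  {S | ∃ x : Fin n → M, (∀ i, x i ∈ A) ∧ ∑ i, x i = S}

theorem nsmul_mem_nfoldSumset {a : M} (n : ℕ) (ha : a ∈ A) : n • a ∈ nfoldSumset n A :=
  ⟨fun _ => a, fun _ => ha, by simp⟩

theorem add_mem_nfoldSumset (hS : S ∈ nfoldSumset m A) (hT : T ∈ nfoldSumset n A) :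
    S + T ∈ nfoldSumset (m + n) A := by
  obtain ⟨x, hx, rfl⟩ := hS
  obtain ⟨y, hy, rfl⟩ := hT
  refine ⟨Fin.append x y, Fin.addCases (fun i => ?_) fun i => ?_, by simp [Fin.sum_univ_add]⟩
  · simpa only [Fin.append_left] using hx i
  · simpa only [Fin.append_right] using hy i

theorem subset_nfoldSumset_one : A ⊆ nfoldSumset 1 A := fun a ha => by
  simpa only [one_nsmul] using nsmul_mem_nfoldSumset 1 ha

end Sumset

section IntervalSumset

variable {A : Set ℕ} {m n a b p q S : ℕ}

theorem Icc_add_subset_nfoldSumset (hpq : p ≤ q) (hab : a ≤ b)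
    (hm : Set.Icc p q ⊆ nfoldSumset m A) (hn : Set.Icc a b ⊆ nfoldSumset n A) :
    Set.Icc (p + a) (q + b) ⊆ nfoldSumset (m + n) A := by
  rintro S ⟨hl, hu⟩
  obtain ⟨u, v, hup, hva, rfl⟩ : ∃ u v, u ∈ Set.Icc p q ∧ v ∈ Set.Icc a b ∧ u + v = S :=
    ⟨max p (S - b), S - max p (S - b), ⟨by omega, by omega⟩, ⟨by omega, by omega⟩, by omega⟩
  exact add_mem_nfoldSumset (hm hup) (hn hva)

theorem Icc_mul_subset_nfoldSumset (n : ℕ) (hab : a ≤ b) (h : Set.Icc a b ⊆ A) :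
    Set.Icc (n * a) (n * b) ⊆ nfoldSumset n A := by
  induction n with
  | zero =>
    rintro S ⟨-, hS⟩
    obtain rfl : S = 0 := by omega
    exact ⟨Fin.elim0, fun i => i.elim0, by simp⟩
  | succ n ih =>
    rw [add_one_mul, add_one_mul]
    exact Icc_add_subset_nfoldSumset (Nat.mul_le_mul_left n hab) hab ih
      (h.trans subset_nfoldSumset_one)

/-- One summand is taken from `[p, q]` and `m - 1` from `[a, b]`; the bounds have `a` and `b` moved
across so that the truncated difference `m - 1` does not occur. -/
theorem mem_nfoldSumset_of_Icc_subset_of_Icc_subset (hm : 0 < m) (hpq : p ≤ q)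
    (hab : a ≤ b) (hp : Set.Icc p q ⊆ A) (ha : Set.Icc a b ⊆ A) (hl : p + m * a ≤ S + a)
    (hu : S + b ≤ q + m * b) : S ∈ nfoldSumset m A := by
  obtain ⟨n, rfl⟩ : ∃ n, m = 1 + n := Nat.exists_eq_add_of_le hm
  rw [one_add_mul] at hl hu
  exact Icc_add_subset_nfoldSumset hpq (Nat.mul_le_mul_left n hab)
    (hp.trans subset_nfoldSumset_one) (Icc_mul_subset_nfoldSumset n hab ha)
    ⟨by omega, by omega⟩

end IntervalSumset

/-- The set `A` contains no solution of `x₁ + ⋯ + xₘ + c = 2y`. -/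
def SolutionFree (m c : ℕ) (A : Set ℕ) : Prop :=
  ∀ y ∈ A, ∀ S ∈ nfoldSumset m A, S + c ≠ 2 * y

/-- A 2-coloring of `{1, …, R}` without monochromatic solutions of `x₁ + ⋯ + xₘ + c = 2y`,
given by its colour classes `A` and `B`, which need not be disjoint. -/
structure IsSolutionFreeCover (m c R : ℕ) (A B : Set ℕ) : Prop where
  left : SolutionFree m c A
  right : SolutionFree m c B
  cover : Set.Icc 1 R ⊆ A ∪ B

namespace IsSolutionFreeCover

section General

variable {m c R L S y n : ℕ} {A B : Set ℕ}

theorem symm (h : IsSolutionFreeCover m c R A B) : IsSolutionFreeCover m c R B A :=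
  ⟨h.right, h.left, Set.union_comm A B ▸ h.cover⟩

theorem mem_right_of_sum (h : IsSolutionFreeCover m c R A B) (hS : S ∈ nfoldSumset m A)
    (hy : y ∈ Set.Icc 1 R) (hSy : S + c = 2 * y) : y ∈ B :=
  (h.cover hy).resolve_left fun hyA => h.left y hyA S hS hSy

theorem false_of_consecutive_sums (h : IsSolutionFreeCover m c R A B)
    (hA : Set.Icc L (L + 1) ⊆ nfoldSumset m A) (hB : Set.Icc L (L + 1) ⊆ nfoldSumset m B)
    (hpos : 1 ≤ L + c) (hle : L + c ≤ 2 * R) : False := by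
  obtain ⟨S, hS, y, hSy⟩ : ∃ S ∈ Set.Icc L (L + 1), ∃ y, S + c = 2 * y := by
    obtain ⟨y, hy | hy⟩ := Nat.even_or_odd' (L + c)
    · exact ⟨L, ⟨le_rfl, by omega⟩, y, hy⟩
    · exact ⟨L + 1, ⟨by omega, le_rfl⟩, y + 1, by omega⟩
  have hy : y ∈ Set.Icc 1 R := by
    obtain ⟨hS₁, hS₂⟩ := hS
    exact ⟨by omega, by omega⟩
  exact h.right y (h.mem_right_of_sum (hA hS) hy hSy) S (hB hS) hSy

theorem exists_Icc_subset_left (h : IsSolutionFreeCover m c R A B) (h1 : 1 ∈ A) (hn : 1 < n)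
    (hnR : n ≤ R) (hnB : n ∈ B) : ∃ s, 1 ≤ s ∧ s < n ∧ Set.Icc 1 s ⊆ A ∧ s + 1 ∈ B := by
  classical
  have hex : ∃ s, 1 ≤ s ∧ s + 1 ∈ B := ⟨n - 1, by omega, by rwa [Nat.sub_add_cancel hn.le]⟩
  obtain ⟨hs, hsB⟩ := Nat.find_spec hex
  have hsn : Nat.find hex ≤ n - 1 :=
    Nat.find_min' hex ⟨by omega, by rwa [Nat.sub_add_cancel hn.le]⟩
  refine ⟨Nat.find hex, hs, by omega, fun t ⟨ht, hts⟩ => ?_, hsB⟩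
  obtain rfl | ht' := ht.eq_or_lt
  · exact h1
  · refine (h.cover ⟨ht, by omega⟩).resolve_right fun htB => ?_
    exact Nat.find_min hex (m := t - 1) (by omega) ⟨by omega, by rwa [Nat.sub_add_cancel ht]⟩

end General

section EvenParameters

variable {k d R a b y s : ℕ} {A B : Set ℕ}

theorem mem_right_of_Icc_subset (h : IsSolutionFreeCover (2 * k) (2 * d) R A B) (hab : a ≤ b)
    (hA : Set.Icc a b ⊆ A) (hy : y ∈ Set.Icc (k * a + d) (k * b + d)) (hyR : y ∈ Set.Icc 1 R) :
    y ∈ B := by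
  obtain ⟨hl, hu⟩ := hy
  refine h.mem_right_of_sum (S := 2 * y - 2 * d)
    (Icc_mul_subset_nfoldSumset (2 * k) hab hA ⟨?_, ?_⟩) hyR (by omega)
  · rw [mul_assoc]; omega
  · rw [mul_assoc]; omega

theorem mul_add_mem_right (h : IsSolutionFreeCover (2 * k) (2 * d) R A B) (ha : a ∈ A)
    (hR : k * a + d ∈ Set.Icc 1 R) : k * a + d ∈ B :=
  h.mem_right_of_Icc_subset le_rfl (by simpa using ha) ⟨le_rfl, le_rfl⟩ hR

theorem one_notMem_left (h : IsSolutionFreeCover 2 (2 * d) (1 + 2 * d) A B) : 1 ∉ A := by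
  intro h1
  have add_mem {C : Set ℕ} {u v : ℕ} (hu : u ∈ C) (hv : v ∈ C) : u + v ∈ nfoldSumset 2 C :=
    add_mem_nfoldSumset (subset_nfoldSumset_one hu) (subset_nfoldSumset_one hv)
  have hB : 1 + d ∈ B := h.mem_right_of_sum (add_mem h1 h1) ⟨by omega, by omega⟩ (by ring)
  have hA : 1 + 2 * d ∈ A :=
    h.symm.mem_right_of_sum (add_mem hB hB) ⟨by omega, by omega⟩ (by ring)
  exact h.left _ hA _ (add_mem h1 hA) (by ring)

theorem three_mem_right (h : IsSolutionFreeCover (2 * k) (2 * d) R A B) (h1 : 1 ∈ A)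
    (hA : k * 2 + d ∈ A) (hR : 3 ≤ R) : 3 ∈ B := by
  refine (h.cover ⟨by omega, hR⟩).resolve_left fun h3 => h.left _ hA (k * 1 + k * 3) ?_ (by ring)
  rw [two_mul]
  exact add_mem_nfoldSumset (nsmul_mem_nfoldSumset k h1) (nsmul_mem_nfoldSumset k h3)

theorem two_notMem_right (h : IsSolutionFreeCover (2 * k) (2 * d) (k * (k + d) + d) A B)
    (hk : 2 ≤ k) (hd : 1 ≤ d) (h1 : 1 ∈ A) : 2 ∉ B := by
  intro h2
  have hkd : k * 3 ≤ k * (k + d) := Nat.mul_le_mul_left k (by omega)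
  have hB : k * 1 + d ∈ B := h.mul_add_mem_right h1 ⟨by omega, by omega⟩
  have hA : k * 2 + d ∈ A := h.symm.mul_add_mem_right h2 ⟨by omega, by omega⟩
  have h23 : Set.Icc 2 3 ⊆ B := by
    rintro t ⟨ht₂, ht₃⟩
    obtain rfl | rfl : t = 2 ∨ t = 3 := by omega
    exacts [h2, h.three_mem_right h1 hA (by omega)]
  have hAIcc : Set.Icc (k * 3 + d - 1) (k * 3 + d) ⊆ A := fun y ⟨hl, hu⟩ =>
    h.symm.mem_right_of_Icc_subset (by omega) h23 ⟨by omega, hu⟩ ⟨by omega, by omega⟩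
  refine h.false_of_consecutive_sums (L := 5 * k + d - 2) ?_ ?_ (by omega) ?_
  · rintro S ⟨hl, hu⟩
    exact mem_nfoldSumset_of_Icc_subset_of_Icc_subset (by omega) (by omega) le_rfl hAIcc
      (by simpa using h1) (by omega) (by omega)
  · rintro S ⟨hl, hu⟩
    exact mem_nfoldSumset_of_Icc_subset_of_Icc_subset (by omega) le_rfl (by omega)
      (by simpa using hB) h23 (by omega) (by omega)
  · have : 5 * k + 3 * d ≤ 2 * (k * (k + d) + d) + 2 := by nlinarith
    omega

theorem add_one_notMem_right (h : IsSolutionFreeCover (2 * k) (2 * d) (k * (k + d) + d) A B)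
    (hk : 1 ≤ k) (hs : 2 ≤ s) (hskd : s + 1 ≤ k + d) (hA : Set.Icc 1 s ⊆ A) :
    s + 1 ∉ B := by
  intro hsB
  have hks : k * (s + 1) ≤ k * (k + d) := Nat.mul_le_mul_left k hskd
  have hk2 : k * 2 ≤ k * s := Nat.mul_le_mul_left k hs
  have hs1 : 1 * s ≤ k * s := Nat.mul_le_mul_right s hk
  have hsucc : k * (s + 1) = k * s + k := mul_add_one k s
  have hBIcc : Set.Icc (k + d) (k + d + 1) ⊆ B := fun y ⟨hl, hu⟩ =>
    h.mem_right_of_Icc_subset (by omega) hA ⟨by omega, by omega⟩ ⟨by omega, by omega⟩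
  have hwA : k * (s + 1) + d ∈ A := h.symm.mul_add_mem_right hsB ⟨by omega, by omega⟩
  obtain ⟨L, hL⟩ : ∃ L, k + d + 2 * (k * (s + 1)) = L + (s + 1) :=
    Nat.exists_eq_add_of_le' (by omega)
  refine h.false_of_consecutive_sums (L := L) ?_ ?_ (by omega) ?_
  · rintro S ⟨hl, hu⟩
    refine mem_nfoldSumset_of_Icc_subset_of_Icc_subset (by omega) le_rfl (by omega)
      (by simpa using hwA) hA (by omega) ?_
    rw [mul_assoc]; omega
  · rintro S ⟨hl, hu⟩
    refine mem_nfoldSumset_of_Icc_subset_of_Icc_subset (by omega) (by omega) le_rfl hBIcc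
      (by simpa using hsB) ?_ ?_ <;> rw [mul_assoc] <;> omega
  · -- This is `(2k - 1)(s + 1) ≤ (2k - 1)(k + d)` without truncated subtraction.
    have : k + d + 2 * (k * (s + 1)) ≤ 2 * (k * (k + d)) + (s + 1) := by nlinarith
    omega

end EvenParameters

end IsSolutionFreeCover

theorem not_isSolutionFreeCover {k d : ℕ} (hk : 1 ≤ k) (hd : 1 ≤ d) (A B : Set ℕ) :
    ¬ IsSolutionFreeCover (2 * k) (2 * d) (k * (k + d) + d) A B := by
  intro h
  wlog h1 : 1 ∈ A generalizing A B
  · exact this B A h.symm ((h.cover ⟨le_rfl, by omega⟩).resolve_left h1)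
  obtain rfl | hk2 := hk.eq_or_lt
  · rw [show 1 * (1 + d) + d = 1 + 2 * d by ring] at h
    exact h.one_notMem_left h1
  have hkR : k * 1 ≤ k * (k + d) := Nat.mul_le_mul_left k (by omega)
  have hB : k * 1 + d ∈ B := h.mul_add_mem_right h1 ⟨by omega, by omega⟩
  obtain ⟨s, hs, hsk, hA, hsB⟩ := h.exists_Icc_subset_left h1 (by omega) (by omega) hB
  obtain rfl | hs2 := hs.eq_or_lt
  · exact h.two_notMem_right hk2 hd h1 hsB
  · exact h.add_one_notMem_right hk hs2 (by omega) hA hsB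

/-- for `m ≥ 2` even and `c > 0` even, with `R = (m² + mc)/4 + c/2`,
every 2-coloring of `{1,...,R}` admits a monochromatic solution to
`x_1 + ... + x_m + c = 2·x_0`. -/
theorem stmt2 (m c : ℕ) (hm : 2 ≤ m) (hme : Even m) (hc : 0 < c) (hce : Even c)
    (Δ : ℕ → Fin 2) :
    ∃ (x : Fin m → ℕ) (x0 : ℕ),
      (∀ i, x i ∈ Finset.Icc 1 ((m ^ 2 + m * c) / 4 + c / 2)) ∧
      x0 ∈ Finset.Icc 1 ((m ^ 2 + m * c) / 4 + c / 2) ∧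
      (∀ i, Δ (x i) = Δ x0) ∧
      (∑ i, x i) + c = 2 * x0 := by
  obtain ⟨k, rfl⟩ := hme.two_dvd
  obtain ⟨d, rfl⟩ := hce.two_dvd
  have hR : ((2 * k) ^ 2 + 2 * k * (2 * d)) / 4 + 2 * d / 2 = k * (k + d) + d := by
    have : (2 * k) ^ 2 + 2 * k * (2 * d) = 4 * (k * (k + d)) := by ring
    omega
  rw [hR]
  by_contra hno
  have hfree (γ : Fin 2) : SolutionFree (2 * k) (2 * d)
      {t | t ∈ Finset.Icc 1 (k * (k + d) + d) ∧ Δ t = γ} := by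
    rintro y ⟨hy, rfl⟩ _ ⟨x, hx, rfl⟩ hxy
    exact hno ⟨x, y, fun i => (hx i).1, hy, fun i => (hx i).2, hxy⟩
  refine not_isSolutionFreeCover (by omega) (by omega) _ _ ⟨hfree 0, hfree 1, fun t ht => ?_⟩
  have hΔ : Δ t = 0 ∨ Δ t = 1 := by omega
  exact hΔ.imp (⟨Finset.mem_Icc.2 ht, ·⟩) (⟨Finset.mem_Icc.2 ht, ·⟩)
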